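/- Let k, ℓ be integers with k + ℓ ≥ 2 and let τ = u + iv with v > 0. Then Σ_{m ∈ ℤ} 1/((τ+m)^k (τ̄+m)^ℓ) = (-2πi) Σ_{0 ≤ r ≤ k-1, n ≥ 0} [C(-ℓ, r)(-2πin)^{k-1-r} e^{2πinτ}] / [(-2iv)^{ℓ+r}(k-1-r)!] + (2πi) Σ_{0 ≤ r ≤ ℓ-1, n < 0} [C(-k, r)(-2πin)^{ℓ-1-r} e^{2πinτ̄}] / [(2iv)^{k+r}(ℓ-1-r)!], where C(X,r) = X(X-1)···(X-r+1)/r! is the formal binomial coefficient. -/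

import Mathlib

open Complex Real

/-- The formal binomial coefficient `C(x, r) = x(x-1)⋯(x-r+1)/r!`. -/
noncomputable def fchoose (x : ℂ) (r : ℕ) : ℂ :=
  (∏ i ∈ Finset.range r, (x - i)) / (r.factorial : ℂ)

open scoped ComplexConjugate

/-- Pascal's rule for the formal binomial coefficient. -/
theorem fchoose_add_one_succ (x : ℂ) (r : ℕ) :
    fchoose (x + 1) (r + 1) = fchoose x (r + 1) + fchoose x r := by
  have hr : (r.factorial : ℂ) ≠ 0 := by exact_mod_cast r.factorial_ne_zero
  have hr' : (r : ℂ) + 1 ≠ 0 := by exact_mod_cast r.succ_ne_zero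
  have h : ∏ i ∈ Finset.range r, (x + 1 - ((i + 1 : ℕ) : ℂ)) =
      ∏ i ∈ Finset.range r, (x - i) :=
    Finset.prod_congr rfl fun i _ ↦ by push_cast; ring
  simp only [fchoose]
  rw [Finset.prod_range_succ', h, Finset.prod_range_succ, Nat.factorial_succ]
  push_cast
  field_simp
  ring

theorem fchoose_zero_right (x : ℂ) : fchoose x 0 = 1 := by simp [fchoose]

theorem fchoose_zero_left_succ (r : ℕ) : fchoose 0 (r + 1) = 0 := by
  simp [fchoose, Finset.prod_range_succ']

/-- The coefficient of `w ^ (k - 1)` in the expansion of `E * exp (c * w) / (w + a) ^ l`, that is,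
the residue at `0` of `E * exp (c * w) / (w ^ k * (w + a) ^ l)`. -/
noncomputable def expResidue (k l : ℤ) (a c E : ℂ) : ℂ :=
  ∑ r ∈ Finset.range k.toNat, fchoose (-l : ℂ) r * c ^ (k.toNat - 1 - r) * E /
    (a ^ (l + r) * ((k.toNat - 1 - r).factorial : ℂ))

theorem expResidue_of_nonpos {k : ℤ} (hk : k ≤ 0) (l : ℤ) (a c E : ℂ) :
    expResidue k l a c E = 0 := by
  simp [expResidue, Int.toNat_of_nonpos hk]

theorem expResidue_natCast_succ_zero (p : ℕ) (a c E : ℂ) :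
    expResidue (p + 1 : ℕ) 0 a c E = c ^ p * E / p.factorial := by
  simp [expResidue, Finset.sum_range_succ', fchoose_zero_left_succ, fchoose_zero_right]

theorem expResidue_one_one (a c E : ℂ) : expResidue 1 1 a c E = E / a := by
  simp [expResidue, fchoose_zero_right]

theorem expResidue_natCast_recurrence (p : ℕ) (l : ℤ) {a : ℂ} (ha : a ≠ 0) (c E : ℂ) :
    a * expResidue (p + 1 : ℕ) l a c E =
      expResidue (p + 1 : ℕ) (l - 1) a c E - expResidue p l a c E := by
  simp only [expResidue, Int.toNat_natCast, Nat.add_sub_cancel]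
  rw [Finset.sum_range_succ', Finset.sum_range_succ', mul_add, Finset.mul_sum, add_sub_right_comm,
    ← Finset.sum_sub_distrib]
  have key (q : ℂ) (d : ℕ) (e : ℤ) : a * (q / (a ^ (e + 1) * d)) = q / (a ^ e * d) := by
    rw [zpow_add_one₀ ha]
    field_simp
  congr 1
  · refine Finset.sum_congr rfl fun r _ ↦ ?_
    have h1 : (-((l - 1 : ℤ) : ℂ)) = -(l : ℂ) + 1 := by push_cast; ring
    have h2 : l + ((r + 1 : ℕ) : ℤ) = l + r + 1 := by push_cast; ring
    have h3 : l - 1 + ((r + 1 : ℕ) : ℤ) = l + r := by push_cast; ring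
    have h4 : p - 1 - r = p - (r + 1) := by omega
    rw [h1, h2, h3, h4, key, fchoose_add_one_succ]
    ring
  · have h2 : l + ((0 : ℕ) : ℤ) = (l - 1) + 1 := by simp
    have h3 : l - 1 + ((0 : ℕ) : ℤ) = l - 1 := by simp
    rw [h2, h3, key, fchoose_zero_right, fchoose_zero_right]

theorem expResidue_recurrence (k l : ℤ) {a : ℂ} (ha : a ≠ 0) (c E : ℂ) :
    a * expResidue k l a c E = expResidue k (l - 1) a c E - expResidue (k - 1) l a c E := by
  rcases le_or_gt k 0 with hk | hk
  · simp [expResidue_of_nonpos hk, expResidue_of_nonpos (show k - 1 ≤ 0 by omega)]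
  · obtain ⟨p, rfl⟩ : ∃ p : ℕ, k = (p + 1 : ℕ) := ⟨(k - 1).toNat, by omega⟩
    rw [expResidue_natCast_recurrence p l ha c E]
    simp

/-- The term `1 / ((τ + m) ^ k * (σ + m) ^ l)` of the Lipschitz sum. -/
noncomputable def lipschitzTerm (τ σ : ℂ) (k l m : ℤ) : ℂ :=
  1 / ((τ + m) ^ k * (σ + m) ^ l)

/-- The contribution of the pole at `-τ` to the Fourier coefficient of index `n`. -/
noncomputable def lowerTerm (τ σ : ℂ) (k l : ℤ) (n : ℕ) : ℂ :=
  expResidue k l (-(τ - σ)) (-(2 * π * I * n)) (exp (2 * π * I * n * τ))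

/-- The contribution of the pole at `-σ` to the Fourier coefficient of index `-(n + 1)`. -/
noncomputable def upperTerm (τ σ : ℂ) (k l : ℤ) (n : ℕ) : ℂ :=
  expResidue l k (τ - σ) (-(2 * π * I * ((-(n + 1) : ℤ) : ℂ)))
    (exp (2 * π * I * ((-(n + 1) : ℤ) : ℂ) * σ))

theorem lipschitzTerm_recurrence {τ σ : ℂ} (k l m : ℤ) (hτ : τ + m ≠ 0) (hσ : σ + m ≠ 0) :
    (τ - σ) * lipschitzTerm τ σ k l m =
      lipschitzTerm τ σ (k - 1) l m - lipschitzTerm τ σ k (l - 1) m := by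
  simp only [lipschitzTerm]
  rw [zpow_sub_one₀ hτ, zpow_sub_one₀ hσ]
  have := zpow_ne_zero k hτ
  have := zpow_ne_zero l hσ
  field_simp
  ring

theorem lowerTerm_recurrence {τ σ : ℂ} (k l : ℤ) (h : τ - σ ≠ 0) (n : ℕ) :
    (τ - σ) * lowerTerm τ σ k l n = lowerTerm τ σ (k - 1) l n - lowerTerm τ σ k (l - 1) n := by
  have := expResidue_recurrence k l (neg_ne_zero.2 h) (-(2 * π * I * n)) (exp (2 * π * I * n * τ))
  simp only [lowerTerm]
  linear_combination -this

theorem upperTerm_recurrence {τ σ : ℂ} (k l : ℤ) (h : τ - σ ≠ 0) (n : ℕ) :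
    (τ - σ) * upperTerm τ σ k l n = upperTerm τ σ (k - 1) l n - upperTerm τ σ k (l - 1) n :=
  expResidue_recurrence l k h _ _

/-- The Lipschitz formula for the exponents `k`, `l`, including convergence of all series. -/
def LipschitzFormula (τ σ : ℂ) (k l : ℤ) : Prop :=
  ∃ s t : ℂ, HasSum (lipschitzTerm τ σ k l) (-(2 * π * I) * s + 2 * π * I * t) ∧
    HasSum (lowerTerm τ σ k l) s ∧ HasSum (upperTerm τ σ k l) t

theorem add_intCast_ne_zero_of_im_ne_zero {z : ℂ} (hz : z.im ≠ 0) (m : ℤ) : z + m ≠ 0 :=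
  fun h ↦ hz (by simpa using congrArg im h)

section Recurrence

variable {τ σ : ℂ} {k l : ℤ}

theorem LipschitzFormula.of_sub_one (hτ : 0 < τ.im) (hσ : σ.im < 0)
    (h₁ : LipschitzFormula τ σ (k - 1) l) (h₂ : LipschitzFormula τ σ k (l - 1)) :
    LipschitzFormula τ σ k l := by
  obtain ⟨s₁, t₁, hf₁, hs₁, ht₁⟩ := h₁
  obtain ⟨s₂, t₂, hf₂, hs₂, ht₂⟩ := h₂
  have h : τ - σ ≠ 0 := fun h ↦ by rw [sub_eq_zero.1 h] at hτ; linarith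
  refine ⟨(τ - σ)⁻¹ * (s₁ - s₂), (τ - σ)⁻¹ * (t₁ - t₂), ?_, ?_, ?_⟩
  · convert! (hf₁.sub hf₂).mul_left (τ - σ)⁻¹ using 1
    · funext m
      rw [← lipschitzTerm_recurrence k l m (add_intCast_ne_zero_of_im_ne_zero hτ.ne' m)
        (add_intCast_ne_zero_of_im_ne_zero hσ.ne m), inv_mul_cancel_left₀ h]
    · ring
  · convert! (hs₁.sub hs₂).mul_left (τ - σ)⁻¹ using 1
    funext n
    rw [← lowerTerm_recurrence k l h, inv_mul_cancel_left₀ h]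
  · convert! (ht₁.sub ht₂).mul_left (τ - σ)⁻¹ using 1
    funext n
    rw [← upperTerm_recurrence k l h, inv_mul_cancel_left₀ h]

theorem LipschitzFormula.sub_one_right (hτ : 0 < τ.im) (hσ : σ.im < 0)
    (h₁ : LipschitzFormula τ σ (k - 1) l) (h₂ : LipschitzFormula τ σ k l) :
    LipschitzFormula τ σ k (l - 1) := by
  obtain ⟨s₁, t₁, hf₁, hs₁, ht₁⟩ := h₁
  obtain ⟨s₂, t₂, hf₂, hs₂, ht₂⟩ := h₂
  have h : τ - σ ≠ 0 := fun h ↦ by rw [sub_eq_zero.1 h] at hτ; linarith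
  refine ⟨s₁ - (τ - σ) * s₂, t₁ - (τ - σ) * t₂, ?_, ?_, ?_⟩
  · convert! hf₁.sub (hf₂.mul_left (τ - σ)) using 1
    · funext m
      rw [lipschitzTerm_recurrence k l m (add_intCast_ne_zero_of_im_ne_zero hτ.ne' m)
        (add_intCast_ne_zero_of_im_ne_zero hσ.ne m), sub_sub_cancel]
    · ring
  · convert! hs₁.sub (hs₂.mul_left (τ - σ)) using 1
    funext n
    rw [lowerTerm_recurrence k l h, sub_sub_cancel]
  · convert! ht₁.sub (ht₂.mul_left (τ - σ)) using 1
    funext n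
    rw [upperTerm_recurrence k l h, sub_sub_cancel]

theorem LipschitzFormula.sub_one_left (hτ : 0 < τ.im) (hσ : σ.im < 0)
    (h₁ : LipschitzFormula τ σ k (l - 1)) (h₂ : LipschitzFormula τ σ k l) :
    LipschitzFormula τ σ (k - 1) l := by
  obtain ⟨s₁, t₁, hf₁, hs₁, ht₁⟩ := h₁
  obtain ⟨s₂, t₂, hf₂, hs₂, ht₂⟩ := h₂
  have h : τ - σ ≠ 0 := fun h ↦ by rw [sub_eq_zero.1 h] at hτ; linarith
  refine ⟨s₁ + (τ - σ) * s₂, t₁ + (τ - σ) * t₂, ?_, ?_, ?_⟩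
  · convert! hf₁.add (hf₂.mul_left (τ - σ)) using 1
    · funext m
      rw [lipschitzTerm_recurrence k l m (add_intCast_ne_zero_of_im_ne_zero hτ.ne' m)
        (add_intCast_ne_zero_of_im_ne_zero hσ.ne m), add_sub_cancel]
    · ring
  · convert! hs₁.add (hs₂.mul_left (τ - σ)) using 1
    funext n
    rw [lowerTerm_recurrence k l h, add_sub_cancel]
  · convert! ht₁.add (ht₂.mul_left (τ - σ)) using 1
    funext n
    rw [upperTerm_recurrence k l h, add_sub_cancel]

end Recurrence

theorem norm_exp_two_pi_I_mul_lt_one {z : ℂ} (hz : 0 < z.im) : ‖exp (2 * π * I * z)‖ < 1 :=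
  UpperHalfPlane.norm_exp_two_pi_I_lt_one ⟨z, hz⟩

/-- The classical Lipschitz formula, as a statement about convergent sums. -/
theorem hasSum_one_div_add_intCast_pow {p : ℕ} (hp : 1 ≤ p) {z : ℂ} (hz : 0 < z.im) :
    ∃ s : ℂ, HasSum (fun n : ℕ ↦ (n : ℂ) ^ p * exp (2 * π * I * z) ^ n) s ∧
      HasSum (fun m : ℤ ↦ 1 / (z + m) ^ (p + 1)) ((-2 * π * I) ^ (p + 1) / p.factorial * s) := by
  refine ⟨_, (summable_pow_mul_geometric_of_norm_lt_one p
    (norm_exp_two_pi_I_mul_lt_one hz)).hasSum, ?_⟩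
  have h := EisensteinSeries.qExpansion_identity hp ⟨z, hz⟩
  simp only at h
  rw [← h]
  refine Summable.hasSum ?_
  have := EisensteinSeries.linear_right_summable z 1 (k := (p + 1 : ℕ)) (by omega)
  simpa only [Int.cast_one, one_mul, zpow_natCast, ← one_div] using this

theorem lipschitzFormula_natCast_zero {p : ℕ} (hp : 1 ≤ p) {τ : ℂ} (σ : ℂ) (hτ : 0 < τ.im) :
    LipschitzFormula τ σ (p + 1 : ℕ) 0 := by
  obtain ⟨s, hs, hf⟩ := hasSum_one_div_add_intCast_pow hp hτ
  refine ⟨(-2 * π * I) ^ p / p.factorial * s, 0, ?_, ?_, ?_⟩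
  · convert! hf using 1
    · funext m
      simp only [lipschitzTerm, zpow_natCast, zpow_zero, mul_one]
    · ring
  · convert! hs.mul_left ((-2 * π * I) ^ p / p.factorial) using 1
    funext n
    rw [lowerTerm, expResidue_natCast_succ_zero, ← Complex.exp_nat_mul,
      show (-(2 * π * I * n) : ℂ) = -2 * π * I * n by ring, mul_pow,
      show 2 * π * I * n * τ = n * (2 * π * I * τ) by ring]
    ring
  · exact hasSum_zero

theorem lipschitzFormula_zero_natCast {p : ℕ} (hp : 1 ≤ p) (τ : ℂ) {σ : ℂ} (hσ : σ.im < 0) :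
    LipschitzFormula τ σ 0 (p + 1 : ℕ) := by
  obtain ⟨s, hs, hf⟩ := hasSum_one_div_add_intCast_pow hp (z := -σ) (by simpa using hσ)
  refine ⟨0, (2 * π * I) ^ p / p.factorial * s, ?_, ?_, ?_⟩
  · convert! ((Equiv.neg ℤ).hasSum_iff.2 hf).mul_left ((-1) ^ (p + 1)) using 1
    · funext m
      simp only [lipschitzTerm, zpow_natCast, zpow_zero, one_mul, Function.comp_apply,
        Equiv.neg_apply, Int.cast_neg, ← neg_add, neg_pow (σ + m)]
      rcases neg_one_pow_eq_or ℂ (p + 1) with h | h <;> simp [h]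
    · rw [show (-2 * π * I : ℂ) = -1 * (2 * π * I) by ring, mul_pow (-1)]
      have : ((-1 : ℂ) ^ (p + 1)) * (-1) ^ (p + 1) = 1 := by rw [← mul_pow]; simp
      linear_combination (-(2 * π * I) ^ (p + 1) / p.factorial * s) * this
  · exact hasSum_zero
  · have hs' := (hasSum_nat_add_iff' 1).2 hs
    simp only [Finset.range_one, Finset.sum_singleton, Nat.cast_zero, zero_pow (by omega : p ≠ 0),
      zero_mul, sub_zero] at hs'
    convert! hs'.mul_left ((2 * π * I) ^ p / p.factorial) using 1
    funext n
    rw [upperTerm, expResidue_natCast_succ_zero, ← Complex.exp_nat_mul,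
      show (-(2 * π * I * ((-(n + 1) : ℤ) : ℂ))) = 2 * π * I * ((n + 1 : ℕ) : ℂ) by
        push_cast; ring, mul_pow,
      show 2 * π * I * ((-(n + 1) : ℤ) : ℂ) * σ = ((n + 1 : ℕ) : ℂ) * (2 * π * I * -σ) by
        push_cast; ring]
    ring

theorem hasSum_cotTerm {z : ℂ} (hz : z ∈ integerComplement) :
    HasSum (fun n : ℕ ↦ 1 / (z - (n + 1)) + 1 / (z + (n + 1)))
      (π * Complex.cot (π * z) - 1 / z) := by
  rw [cot_series_rep' hz]
  exact (summable_cotTerm hz).hasSum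

theorem mem_integerComplement_of_im_ne_zero {z : ℂ} (hz : z.im ≠ 0) : z ∈ integerComplement := by
  rintro ⟨m, rfl⟩
  simp at hz

theorem summable_lipschitzTerm_conj_one_one (τ : ℂ) :
    Summable (lipschitzTerm τ (conj τ) 1 1) := by
  refine Summable.of_norm ?_
  convert! (EisensteinSeries.linear_right_summable τ 1 le_rfl).norm using 1
  funext m
  have h : ‖conj τ + m‖ = ‖τ + m‖ := by
    rw [← norm_conj (τ + m)]
    simp
  simp [lipschitzTerm, h, zpow_ofNat, pow_two]

theorem hasSum_lipschitzTerm_conj_one_one {τ : ℂ} (hτ : 0 < τ.im) :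
    HasSum (lipschitzTerm τ (conj τ) 1 1)
      ((τ - conj τ)⁻¹ * (π * Complex.cot (π * conj τ) - π * Complex.cot (π * τ))) := by
  have hσ : (conj τ).im ≠ 0 := by simpa using hτ.ne'
  have h : τ - conj τ ≠ 0 := by
    rw [sub_conj]
    simpa using hτ.ne'
  have hrec (m : ℤ) : lipschitzTerm τ (conj τ) 1 1 m =
      (τ - conj τ)⁻¹ * (1 / (conj τ + m) - 1 / (τ + m)) := by
    rw [eq_inv_mul_iff_mul_eq₀ h,
      lipschitzTerm_recurrence 1 1 m (add_intCast_ne_zero_of_im_ne_zero hτ.ne' m)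
        (add_intCast_ne_zero_of_im_ne_zero hσ m)]
    simp [lipschitzTerm]
  have hsum := summable_lipschitzTerm_conj_one_one τ
  have hpos := (hsum.comp_injective
    (i := fun n : ℕ ↦ (n + 1 : ℤ)) (fun a b h ↦ by simpa using h)).hasSum
  have hneg := (hsum.comp_injective
    (i := fun n : ℕ ↦ (-(n + 1) : ℤ)) (fun a b h ↦ by simpa using h)).hasSum
  have hcot := ((hasSum_cotTerm (mem_integerComplement_of_im_ne_zero hσ)).sub
    (hasSum_cotTerm (mem_integerComplement_of_im_ne_zero hτ.ne'))).mul_left (τ - conj τ)⁻¹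
  have hpair := (hpos.add hneg).unique (by
    convert! hcot using 1
    funext n
    simp only [Function.comp_apply, hrec]
    push_cast
    ring)
  convert! HasSum.of_add_one_of_neg_add_one hpos hneg using 1
  have h0 := hrec 0
  simp only [Int.cast_zero, add_zero] at h0
  linear_combination -hpair - h0

theorem lipschitzFormula_conj_one_one {τ : ℂ} (hτ : 0 < τ.im) :
    LipschitzFormula τ (conj τ) 1 1 := by
  have hq := (summable_geometric_of_norm_lt_one (norm_exp_two_pi_I_mul_lt_one hτ)).hasSum
  have hσ : 0 < (-conj τ).im := by simpa using hτ
  have hq' := (summable_geometric_of_norm_lt_one (norm_exp_two_pi_I_mul_lt_one hσ)).hasSum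
  have hcot := pi_mul_cot_pi_q_exp ⟨τ, hτ⟩
  have hcot' := pi_mul_cot_pi_q_exp ⟨-conj τ, hσ⟩
  have hneg : Complex.cot (π * -conj τ) = -Complex.cot (π * conj τ) := by
    simp [Complex.cot_eq_cos_div_sin, div_neg]
  simp only [hneg] at hcot hcot'
  have hq1 := (hasSum_nat_add_iff' 1).2 hq'
  have hs : lowerTerm τ (conj τ) 1 1 =
      fun n ↦ (-(τ - conj τ))⁻¹ * exp (2 * π * I * τ) ^ n := by
    funext n
    rw [lowerTerm, expResidue_one_one, ← Complex.exp_nat_mul,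
      show 2 * π * I * n * τ = n * (2 * π * I * τ) by ring]
    ring
  have ht : upperTerm τ (conj τ) 1 1 =
      fun n ↦ (τ - conj τ)⁻¹ * exp (2 * π * I * -conj τ) ^ (n + 1) := by
    funext n
    rw [upperTerm, expResidue_one_one, ← Complex.exp_nat_mul,
      show 2 * π * I * ((-(n + 1) : ℤ) : ℂ) * conj τ = ((n + 1 : ℕ) : ℂ) * (2 * π * I * -conj τ) by
        push_cast; ring]
    ring
  refine ⟨_, _, ?_, hs ▸ hq.mul_left _, ht ▸ hq1.mul_left _⟩
  convert! hasSum_lipschitzTerm_conj_one_one hτ using 1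
  simp only [Finset.range_one, Finset.sum_singleton, pow_zero, inv_neg]
  linear_combination (τ - conj τ)⁻¹ * (hcot + hcot')

theorem lipschitzFormula_of_two_le_add {τ : ℂ} (hτ : 0 < τ.im) {k l : ℤ} (hkl : 2 ≤ k + l) :
    LipschitzFormula τ (conj τ) k l := by
  have hσ : (conj τ).im < 0 := by simpa using hτ
  have hl (j : ℕ) : ∀ k : ℤ, 2 + j ≤ k → LipschitzFormula τ (conj τ) k (-j) := by
    induction j with
    | zero =>
      intro k hk
      obtain ⟨p, rfl⟩ : ∃ p : ℕ, k = (p + 1 : ℕ) := ⟨(k - 1).toNat, by omega⟩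
      exact lipschitzFormula_natCast_zero (by omega) _ hτ
    | succ j ih =>
      intro k hk
      rw [show (-((j + 1 : ℕ) : ℤ)) = -j - 1 by push_cast; ring]
      exact .sub_one_right hτ hσ (ih _ (by omega)) (ih _ (by omega))
  have hk (j : ℕ) : ∀ l : ℤ, 2 + j ≤ l → LipschitzFormula τ (conj τ) (-j) l := by
    induction j with
    | zero =>
      intro l hl
      obtain ⟨p, rfl⟩ : ∃ p : ℕ, l = (p + 1 : ℕ) := ⟨(l - 1).toNat, by omega⟩
      exact lipschitzFormula_zero_natCast (by omega) _ hσ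
    | succ j ih =>
      intro l hl
      rw [show (-((j + 1 : ℕ) : ℤ)) = -j - 1 by push_cast; ring]
      exact .sub_one_left hτ hσ (ih _ (by omega)) (ih _ (by omega))
  have hpos (d : ℕ) : ∀ k l : ℤ, k + l = d + 2 → LipschitzFormula τ (conj τ) k l := by
    induction d with
    | zero =>
      intro k l h
      rcases le_or_gt k 0 with h0 | h0
      · simpa [abs_of_nonpos h0] using hk k.natAbs l (by omega)
      rcases le_or_gt l 0 with h1 | h1
      · simpa [abs_of_nonpos h1] using hl l.natAbs k (by omega)
      obtain ⟨rfl, rfl⟩ : k = 1 ∧ l = 1 := by omega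
      exact lipschitzFormula_conj_one_one hτ
    | succ d ih =>
      intro k l h
      exact .of_sub_one hτ hσ (ih _ _ (by push_cast at h; omega)) (ih _ _ (by push_cast at h; omega))
  exact hpos (k + l - 2).toNat k l (by omega)

/-- Lipschitz-type summation formula: for integers `k, ℓ` with `k + ℓ ≥ 2` and
`τ = u + iv` with `v > 0`,
`∑_{m ∈ ℤ} 1/((τ+m)^k (τ̄+m)^ℓ)` equals the stated combination of exponential sums. -/
theorem lipschitz_summation (k l : ℤ) (hkl : 2 ≤ k + l) (u v : ℝ) (hv : 0 < v) :
    (∑' m : ℤ,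
        1 / (((u : ℂ) + v * Complex.I + m) ^ k *
          ((u : ℂ) - v * Complex.I + m) ^ l)) =
      (-(2 * π * Complex.I)) *
        ∑' n : ℕ, ∑ r ∈ Finset.range k.toNat,
          fchoose (-l : ℂ) r * (-(2 * π * Complex.I * n)) ^ (k.toNat - 1 - r) *
            Complex.exp (2 * π * Complex.I * n * ((u : ℂ) + v * Complex.I)) /
              ((-(2 * Complex.I * v)) ^ (l + r) * ((k.toNat - 1 - r).factorial : ℂ)) +
      (2 * π * Complex.I) *
        ∑' n : ℕ, ∑ r ∈ Finset.range l.toNat,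
          fchoose (-k : ℂ) r *
            (-(2 * π * Complex.I * ((-(n + 1) : ℤ) : ℂ))) ^ (l.toNat - 1 - r) *
            Complex.exp (2 * π * Complex.I * ((-(n + 1) : ℤ) : ℂ) *
              ((u : ℂ) - v * Complex.I)) /
              ((2 * Complex.I * v) ^ (k + r) * ((l.toNat - 1 - r).factorial : ℂ)) := by
  have hσ : (starRingEnd ℂ) (u + v * I) = u - v * I := by
    simp [sub_eq_add_neg]
  obtain ⟨s, t, hf, hs, ht⟩ :=
    lipschitzFormula_of_two_le_add (τ := u + v * I) (by simpa using hv) hkl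
  rw [hσ] at hf hs ht
  have ha : ((u : ℂ) + v * I) - (u - v * I) = 2 * I * v := by ring
  unfold lowerTerm expResidue at hs
  unfold upperTerm expResidue at ht
  rw [ha] at hs ht
  exact hf.tsum_eq.trans (by rw [hs.tsum_eq, ht.tsum_eq])
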